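/- In the mismatch setup, for any full-support probability distribution α on U with g_α(u) := −Σ_{u'} T(u'|u)·ln((Tα)(u')) + ln α(u) − Q(u), and for any probability distribution β on U, one has Σ_{u} β(u)·g_α(u) = D(Tβ ‖ Tα) − D(β ‖ α) + σ̄(β). -/

import Mathlib

open scoped BigOperators

/-- Shannon entropy (natural log) of a distribution on a finite type. -/
noncomputable def shannonH {U : Type*} [Fintype U] (p : U → ℝ) : ℝ :=
  -∑ u, p u * Real.log (p u)

/-- Kullback–Leibler divergence between two distributions on a finite type
(with the convention 0·ln(0/q) = 0, automatic since `Real.log 0 = 0`). -/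
noncomputable def klDiv {U : Type*} [Fintype U] (p q : U → ℝ) : ℝ :=
  ∑ u, p u * Real.log (p u / q u)

/-- Action of a Markov kernel `T` (where `T u` is the distribution `T(·|u)`) on
a distribution `p`: `(Tp)(u') = Σ_u p(u)·T(u'|u)`. -/
noncomputable def kernelAct {U : Type*} [Fintype U] (T : U → U → ℝ) (p : U → ℝ) :
    U → ℝ :=
  fun u' => ∑ u, p u * T u u'

/-- The entropy production functional of the mismatch setup:
σ̄(p) = H(Tp) − H(p) − Σ_u p(u)·Q(u). -/
noncomputable def epFunctional {U : Type*} [Fintype U] (T : U → U → ℝ)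
    (Q : U → ℝ) (p : U → ℝ) : ℝ :=
  shannonH (kernelAct T p) - shannonH p - ∑ u, p u * Q u

/-- The u-component of the gradient of σ̄ at a full-support distribution α:
g_α(u) = −Σ_{u'} T(u'|u)·ln((Tα)(u')) + ln α(u) − Q(u). -/
noncomputable def epGrad {U : Type*} [Fintype U] (T : U → U → ℝ) (Q : U → ℝ)
    (α : U → ℝ) : U → ℝ :=
  fun u => -(∑ u', T u u' * Real.log (kernelAct T α u')) + Real.log (α u) - Q u

/-- The divergence splits as negative entropy plus cross entropy when `p ≪ q`. -/
theorem klDiv_eq_of_support_subset {U : Type*} [Fintype U] {p q : U → ℝ}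
    (h : ∀ u, q u = 0 → p u = 0) :
    klDiv p q = -shannonH p - ∑ u, p u * Real.log (q u) := by
  rw [klDiv, shannonH, neg_neg, ← Finset.sum_sub_distrib]
  refine Finset.sum_congr rfl fun u _ => ?_
  by_cases hp : p u = 0
  · simp [hp]
  · rw [Real.log_div hp (mt (h u) hp), mul_sub]

/-- If `α` has full support, then `Tβ` is absolutely continuous with respect to `Tα`. -/
theorem kernelAct_eq_zero_of_pos {U : Type*} [Fintype U] {T : U → U → ℝ}
    (hT : ∀ u u', 0 ≤ T u u') {α : U → ℝ} (hα : ∀ u, 0 < α u) (β : U → ℝ) {u' : U}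
    (h : kernelAct T α u' = 0) : kernelAct T β u' = 0 := by
  have hz := (Finset.sum_eq_zero_iff_of_nonneg
    fun u _ => mul_nonneg (hα u).le (hT u u')).mp h
  refine Finset.sum_eq_zero fun u hu => ?_
  rw [(mul_eq_zero.mp (hz u hu)).resolve_left (hα u).ne', mul_zero]

/-- Pairing with a kernel average of `f` is pairing the pushed distribution with `f`. -/
theorem sum_kernelAct_mul {U : Type*} [Fintype U] (T : U → U → ℝ) (p f : U → ℝ) :
    ∑ u', kernelAct T p u' * f u' = ∑ u, p u * ∑ u', T u u' * f u' := by
  simp only [kernelAct, Finset.sum_mul, Finset.mul_sum, mul_assoc]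
  exact Finset.sum_comm

/-- In the mismatch setup, for any full-support probability distribution α and
any probability distribution β on U,
Σ_u β(u)·g_α(u) = D(Tβ ‖ Tα) − D(β ‖ α) + σ̄(β). -/
theorem inner_product_grad_other
    {U : Type*} [Fintype U]
    (T : U → U → ℝ) (hT : ∀ u u', 0 ≤ T u u') (hTsum : ∀ u, ∑ u', T u u' = 1)
    (Q : U → ℝ)
    (α : U → ℝ) (hα : ∀ u, 0 < α u) (hαsum : ∑ u, α u = 1)
    (β : U → ℝ) (hβ : ∀ u, 0 ≤ β u) (hβsum : ∑ u, β u = 1) :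
    ∑ u, β u * epGrad T Q α u =
      klDiv (kernelAct T β) (kernelAct T α) - klDiv β α + epFunctional T Q β := by
  rw [klDiv_eq_of_support_subset fun _ => kernelAct_eq_zero_of_pos hT hα β,
    klDiv_eq_of_support_subset fun u h => absurd h (hα u).ne', sum_kernelAct_mul]
  simp only [epGrad, epFunctional, mul_sub, mul_add, mul_neg, Finset.sum_sub_distrib,
    Finset.sum_add_distrib, Finset.sum_neg_distrib]
  ring
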